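/- arXiv:2206.01654 — 2 statements merged into one kernel-verified Lean document; each statement's English description precedes it below -/
import Mathlib

section
/- Let c : Ω → [0,∞] be 𝒜-measurable. Then there exists P ∈ M such that P(c) = inf_{Q ∈ M} Q(c); that is, the Kantorovich infimum over finitely additive couplings is always attained, with no further assumptions on c or on μ_1,…,μ_n. -/
open MeasureTheory Set ENNReal

namespace FATransport

variable {α : Type*} [MeasurableSpace α]

/-- The collection of measurable sets of `α` (the σ-field `𝒜`), as a type. -/
abbrev MSet (α : Type*) [MeasurableSpace α] := {A : Set α // MeasurableSet A}

/-- A finitely additive probability on the σ-field of `α`, viewed as an element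
of `[0,1]^𝒜`: it maps the whole space to `1` and is additive on disjoint pairs. -/
def IsFAP (P : MSet α → unitInterval) : Prop :=
  (P ⟨Set.univ, MeasurableSet.univ⟩ : ℝ) = 1 ∧
    ∀ A B : MSet α, Disjoint A.1 B.1 →
      (P ⟨A.1 ∪ B.1, A.2.union B.2⟩ : ℝ) = (P A : ℝ) + (P B : ℝ)

/-- `ℙ`, the set of all finitely additive probabilities on `𝒜`, as a subset of
`[0,1]^𝒜` (with its product topology). -/
def FAPs (α : Type*) [MeasurableSpace α] : Set (MSet α → unitInterval) :=
  {P | IsFAP P}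

/-- Integral of a simple function with respect to a finitely additive set function. -/
noncomputable def simpleInt (P : MSet α → unitInterval) (s : SimpleFunc α ℝ) : ℝ :=
  ∑ y ∈ s.range, y * (P ⟨(⇑s) ⁻¹' {y}, s.measurableSet_fiber y⟩ : ℝ)

/-- `P(f)` for a bounded measurable `f : α → ℝ`: the supremum of the integrals of
simple functions below `f` (for a f.a.p. `P` and bounded measurable `f` this agrees
with the integral defined by uniform approximation by simple functions). -/
noncomputable def fapInt (P : MSet α → unitInterval) (f : α → ℝ) : ℝ :=
  sSup (simpleInt P '' {s : SimpleFunc α ℝ | ∀ x, s x ≤ f x})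

/-- `P(c) = sup_k P(c ∧ k)` for a `[0,∞]`-valued `c`. -/
noncomputable def fapIntTop (P : MSet α → unitInterval) (c : α → ℝ≥0∞) : ℝ≥0∞ :=
  ⨆ k : ℕ, ENNReal.ofReal (fapInt P (fun x => (c x ⊓ (k : ℝ≥0∞)).toReal))

/-- A real-valued `f` is `P`-integrable iff `P(|f|) < ∞`. -/
def FapIntegrable (P : MSet α → unitInterval) (f : α → ℝ) : Prop :=
  fapIntTop P (fun x => ENNReal.ofReal |f x|) < ⊤

/-- `P(f) = P(f⁺) - P(f⁻)` for a (`P`-integrable) real-valued `f`. -/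
noncomputable def fapIntR (P : MSet α → unitInterval) (f : α → ℝ) : ℝ :=
  (fapIntTop P (fun x => ENNReal.ofReal (f x))).toReal -
    (fapIntTop P (fun x => ENNReal.ofReal (-f x))).toReal

/-- `P ≪ Q` for finitely additive probabilities. -/
def FapAC (P Q : MSet α → unitInterval) : Prop :=
  ∀ A : MSet α, (Q A : ℝ) = 0 → (P A : ℝ) = 0

variable {n : ℕ} {Ω : Fin n → Type*} [∀ i, MeasurableSpace (Ω i)]

/-- `M`, the set of finitely additive probabilities on `𝒜 = ⊗ᵢ 𝒜ᵢ` whose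
`i`-th marginal is `μ i` for every `i`. -/
def couplings (μ : ∀ i, Measure (Ω i)) : Set (MSet (∀ i, Ω i) → unitInterval) :=
  {P | IsFAP P ∧ ∀ (i : Fin n) (B : Set (Ω i)) (hB : MeasurableSet B),
    (P ⟨(fun ω => ω i) ⁻¹' B, (measurable_pi_apply i) hB⟩ : ℝ) = (μ i B).toReal}

end FATransport

namespace FATransport

theorem sum_fap {α : Type*} [MeasurableSpace α] {P : MSet α → unitInterval} (hP : IsFAP P)
    (s : SimpleFunc α ℝ) (t : Finset ℝ) :
    ∑ y ∈ t, (P ⟨(⇑s) ⁻¹' {y}, s.measurableSet_fiber y⟩ : ℝ)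
      = P ⟨(⇑s) ⁻¹' (t : Set ℝ), s.measurableSet_preimage _⟩ := by
  classical
  induction t using Finset.induction_on with
  | empty =>
    have h := hP.2 ⟨∅, MeasurableSet.empty⟩ ⟨∅, MeasurableSet.empty⟩ (by simp)
    simp only [Set.union_self] at h
    simp only [Finset.sum_empty, Finset.coe_empty, Set.preimage_empty]
    linarith
  | insert a t ha ih =>
    rw [Finset.sum_insert ha, ih, ← hP.2]
    · congr 3
      ext x
      simp
    · rw [Set.disjoint_left]
      intro x hx hx'
      simp only [Set.mem_preimage, Set.mem_singleton_iff, Finset.mem_coe] at hx hx'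
      exact ha (hx ▸ hx')

theorem simpleInt_le {α : Type*} [MeasurableSpace α] {P : MSet α → unitInterval} (hP : IsFAP P)
    (s : SimpleFunc α ℝ) (K : ℝ) (hK : 0 ≤ K) (hs : ∀ x, s x ≤ K) : simpleInt P s ≤ K := by
  unfold simpleInt
  calc ∑ y ∈ s.range, y * (P ⟨(⇑s) ⁻¹' {y}, s.measurableSet_fiber y⟩ : ℝ)
      ≤ ∑ y ∈ s.range, K * (P ⟨(⇑s) ⁻¹' {y}, s.measurableSet_fiber y⟩ : ℝ) := by
        refine Finset.sum_le_sum fun y hy => ?_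
        obtain ⟨x, rfl⟩ := SimpleFunc.mem_range.1 hy
        exact mul_le_mul_of_nonneg_right (hs x) (P _).2.1
    _ ≤ K := by
        rw [← Finset.mul_sum, sum_fap hP]
        exact mul_le_of_le_one_right hK (P _).2.2

theorem fapIntTop_eq {α : Type*} [MeasurableSpace α] {P : MSet α → unitInterval} (hP : IsFAP P)
    (c : α → ℝ≥0∞) : fapIntTop P c = ⨆ k : ℕ,
      ⨆ s : {s : SimpleFunc α ℝ // ∀ x, s x ≤ (c x ⊓ (k : ℝ≥0∞)).toReal},
        ENNReal.ofReal (simpleInt P s.1) := by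
  unfold fapIntTop fapInt
  congr 1
  ext1 k
  have hb : BddAbove (simpleInt P ''
      {s : SimpleFunc α ℝ | ∀ x, s x ≤ (fun x => (c x ⊓ (k : ℝ≥0∞)).toReal) x}) := by
    refine ⟨k, ?_⟩
    rintro _ ⟨s, hs, rfl⟩
    refine simpleInt_le hP s k (by positivity) fun x => (hs x).trans ?_
    exact ENNReal.toReal_le_of_le_ofReal (by positivity) (by simp)
  have hne : (simpleInt P ''
      {s : SimpleFunc α ℝ | ∀ x, s x ≤ (fun x => (c x ⊓ (k : ℝ≥0∞)).toReal) x}).Nonempty := by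
    refine ⟨_, 0, fun x => ?_, rfl⟩
    simp
  rw [Monotone.map_csSup_of_continuousAt (f := ENNReal.ofReal)
    ENNReal.continuous_ofReal.continuousAt (fun a b h => ENNReal.ofReal_le_ofReal h) hne hb,
    Set.image_image, sSup_image, iSup_subtype]
  rfl

theorem continuous_eval {α : Type*} [MeasurableSpace α] (A : MSet α) :
    Continuous fun P : MSet α → unitInterval => (P A : ℝ) :=
  continuous_subtype_val.comp (continuous_apply A)

theorem isClosed_couplings {n : ℕ} {Ω : Fin n → Type*} [∀ i, MeasurableSpace (Ω i)]
    (μ : ∀ i, Measure (Ω i)) : IsClosed (couplings μ) := by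
  unfold couplings IsFAP
  simp only [Set.setOf_and, Set.setOf_forall]
  refine ((isClosed_eq (continuous_eval _) continuous_const).inter ?_).inter ?_
  · refine isClosed_iInter fun A => isClosed_iInter fun B => isClosed_iInter fun _ => ?_
    exact isClosed_eq (continuous_eval _) ((continuous_eval _).add (continuous_eval _))
  · refine isClosed_iInter fun A => isClosed_iInter fun B => isClosed_iInter fun _ => ?_
    exact isClosed_eq (continuous_eval _) continuous_const

theorem couplings_nonempty {n : ℕ} {Ω : Fin n → Type*} [∀ i, MeasurableSpace (Ω i)]
    (μ : ∀ i, Measure (Ω i)) [∀ i, IsProbabilityMeasure (μ i)] : (couplings μ).Nonempty := by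
  refine ⟨fun A => ⟨(Measure.pi μ).real A.1, measureReal_nonneg, measureReal_le_one⟩,
    ⟨by simp, fun A B h => measureReal_union h B.2⟩, fun i B hB => ?_⟩
  have := (measurePreserving_eval μ i).measure_preimage hB.nullMeasurableSet
  exact congrArg ENNReal.toReal this

/-- the Kantorovich infimum over finitely additive couplings is always
attained: there is `P ∈ M` with `P(c) = inf_{Q ∈ M} Q(c)`, with no further
assumptions on `c` or on the (probability) marginals. -/
theorem exists_min_couplings
    {n : ℕ} (hn : 0 < n) {Ω : Fin n → Type*} [∀ i, MeasurableSpace (Ω i)]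
    (μ : ∀ i, Measure (Ω i)) [∀ i, IsProbabilityMeasure (μ i)]
    (c : (∀ i, Ω i) → ℝ≥0∞) (hc : Measurable c) :
    ∃ P ∈ couplings μ, fapIntTop P c = ⨅ Q ∈ couplings μ, fapIntTop Q c := by
  have hlsc : LowerSemicontinuous fun P : MSet (∀ i, Ω i) → unitInterval => ⨆ k : ℕ,
      ⨆ s : {s : SimpleFunc (∀ i, Ω i) ℝ // ∀ x, s x ≤ (c x ⊓ (k : ℝ≥0∞)).toReal},
        ENNReal.ofReal (simpleInt P s.1) := by
    refine lowerSemicontinuous_iSup fun k => lowerSemicontinuous_iSup fun s => ?_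
    refine Continuous.lowerSemicontinuous (ENNReal.continuous_ofReal.comp ?_)
    unfold simpleInt
    exact continuous_finsetSum _ fun y _ => continuous_const.mul (continuous_eval _)
  obtain ⟨P, hP, hmin⟩ := (hlsc.lowerSemicontinuousOn (couplings μ)).exists_isMinOn
    (couplings_nonempty μ) (isClosed_couplings μ).isCompact
  refine ⟨P, hP, le_antisymm (le_iInf₂ fun Q hQ => ?_) (iInf₂_le P hP)⟩
  rw [fapIntTop_eq hP.1, fapIntTop_eq hQ.1]
  exact hmin hQ

end FATransport
end

section
/- Suppose (Ω_i, 𝒜_i) = (ℝ, ℬ(ℝ)) for all i = 1,…,n, and let c : ℝ^n → [0,∞] be Borel measurable. Let K_2 = {P ∈ M : (π_1,…,π_n) is a P-martingale}. If K_2 ≠ ∅, then K_2 is compact and there exists P ∈ K_2 such that P(c) = inf_{Q ∈ K_2} Q(c). -/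
open MeasureTheory Set ENNReal

namespace FATransport

/-- `(π_1, …, π_n)` is a `P`-martingale for a finitely additive probability `P` on
`ℬ(ℝⁿ)`: each `P(|π_i|) < ∞`, `P(π_1) = 0`, and `P((π_{i+1} - π_i) g(π_1,…,π_i)) = 0`
for every bounded Borel `g` (encoded as a bounded Borel function on `ℝⁿ` depending
only on the first `i` coordinates). -/
def IsMartFAP {n : ℕ} (hn : 0 < n) (P : MSet (Fin n → ℝ) → unitInterval) : Prop :=
  (∀ i : Fin n, fapIntTop P (fun ω => ENNReal.ofReal |ω i|) < ⊤) ∧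
    fapIntR P (fun ω => ω ⟨0, hn⟩) = 0 ∧
    ∀ i j : Fin n, (j : ℕ) = (i : ℕ) + 1 →
      ∀ g : (Fin n → ℝ) → ℝ, Measurable g → (∃ C, ∀ x, |g x| ≤ C) →
        (∀ x y : Fin n → ℝ, (∀ k : Fin n, k ≤ i → x k = y k) → g x = g y) →
        fapIntR P (fun ω => (ω j - ω i) * g ω) = 0

end FATransport

namespace FATransport

/-! Auxiliary lemmas -/

section aux

variable {β : Type*} [MeasurableSpace β]

open scoped Classical in
/-- operator-valued version of `P` -/
noncomputable def opT (P : MSet β → unitInterval) (s : Set β) : ℝ →L[ℝ] ℝ :=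
  if h : MeasurableSet s then (P ⟨s, h⟩ : ℝ) • ContinuousLinearMap.id ℝ ℝ else 0

lemma simpleInt_eq (P : MSet β → unitInterval) (s : SimpleFunc β ℝ) :
    simpleInt P s = s.setToSimpleFunc (opT P) := by
  unfold simpleInt SimpleFunc.setToSimpleFunc
  refine Finset.sum_congr rfl fun y _ => ?_
  rw [opT, dif_pos (s.measurableSet_fiber y)]
  simp [mul_comm]

lemma opT_add {P : MSet β → unitInterval} (hP : IsFAP P) :
    FinMeasAdditive (0 : Measure β) (opT P) := by
  intro s t hs ht _ _ hd
  rw [opT, opT, opT, dif_pos hs, dif_pos ht, dif_pos (hs.union ht), hP.2 ⟨s, hs⟩ ⟨t, ht⟩ hd,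
    add_smul]

lemma simpleInt_add {P : MSet β → unitInterval} (hP : IsFAP P) (s t : SimpleFunc β ℝ) :
    simpleInt P (s + t) = simpleInt P s + simpleInt P t := by
  simp only [simpleInt_eq]
  exact SimpleFunc.setToSimpleFunc_add _ (opT_add hP) (by simp) (by simp)

lemma simpleInt_mono {P : MSet β → unitInterval} (hP : IsFAP P) {s t : SimpleFunc β ℝ}
    (h : ∀ x, s x ≤ t x) : simpleInt P s ≤ simpleInt P t := by
  simp only [simpleInt_eq]
  refine SimpleFunc.setToSimpleFunc_mono (opT_add hP) ?_ (by simp) (by simp) h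
  intro s hs _ x hx
  rw [opT, dif_pos hs]
  simpa using mul_nonneg (P ⟨s, hs⟩).2.1 hx

lemma simpleInt_const {P : MSet β → unitInterval} (hP : IsFAP P) (a : ℝ) :
    simpleInt P (SimpleFunc.const β a) = a := by
  simp only [simpleInt_eq]
  have h0 : opT P ∅ = 0 := by
    have := opT_add hP ∅ ∅ MeasurableSet.empty MeasurableSet.empty (by simp) (by simp) (by simp)
    simpa using this
  rw [SimpleFunc.setToSimpleFunc_const _ h0, opT, dif_pos MeasurableSet.univ, hP.1]
  simp

lemma simpleInt_le_add {P : MSet β → unitInterval} (hP : IsFAP P) {s t : SimpleFunc β ℝ} {ε : ℝ}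
    (h : ∀ x, s x ≤ t x + ε) : simpleInt P s ≤ simpleInt P t + ε := by
  have h1 := simpleInt_mono hP (s := s) (t := t + SimpleFunc.const β ε) (by simpa using h)
  rwa [simpleInt_add hP, simpleInt_const hP] at h1

lemma fapInt_approx {P : MSet β → unitInterval} (hP : IsFAP P) {f : β → ℝ} {s : SimpleFunc β ℝ}
    {ε : ℝ} (h : ∀ x, |f x - s x| ≤ ε) : |fapInt P f - simpleInt P s| ≤ ε := by
  have ub : ∀ y ∈ simpleInt P '' {s : SimpleFunc β ℝ | ∀ x, s x ≤ f x}, y ≤ simpleInt P s + ε := by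
    rintro _ ⟨t, ht, rfl⟩
    refine simpleInt_le_add hP fun x => ?_
    have := abs_le.1 (h x)
    have := ht x
    linarith
  have hm : simpleInt P (s + SimpleFunc.const β (-ε)) ∈
      simpleInt P '' {s : SimpleFunc β ℝ | ∀ x, s x ≤ f x} := by
    refine ⟨_, fun x => ?_, rfl⟩
    have := abs_le.1 (h x)
    simp only [SimpleFunc.coe_add, Pi.add_apply, SimpleFunc.const_apply]
    linarith
  have h1 : fapInt P f ≤ simpleInt P s + ε := csSup_le ⟨_, hm⟩ ub
  have h2 : simpleInt P (s + SimpleFunc.const β (-ε)) ≤ fapInt P f := le_csSup ⟨_, ub⟩ hm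
  rw [simpleInt_add hP, simpleInt_const hP] at h2
  rw [abs_le]
  constructor <;> linarith

/-- bounded measurable functions -/
def BM (f : β → ℝ) : Prop := Measurable f ∧ ∃ C, ∀ x, |f x| ≤ C

lemma BM.add {f g : β → ℝ} (hf : BM f) (hg : BM g) : BM (fun x => f x + g x) := by
  obtain ⟨C, hC⟩ := hf.2
  obtain ⟨D, hD⟩ := hg.2
  exact ⟨hf.1.add hg.1, C + D, fun x => (abs_add_le _ _).trans (add_le_add (hC x) (hD x))⟩

lemma BM.exists_approx {f : β → ℝ} (hf : BM f) {ε : ℝ} (hε : 0 < ε) :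
    ∃ s : SimpleFunc β ℝ, ∀ x, |f x - s x| ≤ ε := by
  obtain ⟨C, hC⟩ := hf.2
  have hm : Measurable (fun x => ε * (⌊f x / ε⌋ : ℝ)) := by
    have h1 : Measurable (fun x => ⌊f x / ε⌋) := (hf.1.div_const ε).floor
    have h2 : Measurable (fun z : ℤ => ε * (z : ℝ)) := measurable_from_top
    exact h2.comp h1
  refine ⟨⟨fun x => ε * (⌊f x / ε⌋ : ℝ), fun y => hm (measurableSet_singleton y), ?_⟩, ?_⟩
  · refine ((Set.finite_Icc ⌊-C / ε⌋ ⌊C / ε⌋).image (fun z : ℤ => ε * (z : ℝ))).subset ?_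
    rintro _ ⟨x, rfl⟩
    have := abs_le.1 (hC x)
    refine ⟨⌊f x / ε⌋, ⟨Int.floor_le_floor ?_, Int.floor_le_floor ?_⟩, rfl⟩
    · exact div_le_div_of_nonneg_right this.1 hε.le
    · exact div_le_div_of_nonneg_right this.2 hε.le
  · intro x
    change |f x - ε * (⌊f x / ε⌋ : ℝ)| ≤ ε
    have h1 := Int.floor_le (f x / ε)
    have h2 := Int.lt_floor_add_one (f x / ε)
    have h3 : f x = ε * (f x / ε) := by field_simp
    rw [abs_le]
    constructor <;> nlinarith

lemma fapInt_add {P : MSet β → unitInterval} (hP : IsFAP P) {f g : β → ℝ} (hf : BM f) (hg : BM g) :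
    fapInt P (fun x => f x + g x) = fapInt P f + fapInt P g := by
  refine eq_of_abs_sub_le_all fun ε hε => ?_
  obtain ⟨s, hs⟩ := hf.exists_approx (ε := ε / 4) (by linarith)
  obtain ⟨t, ht⟩ := hg.exists_approx (ε := ε / 4) (by linarith)
  have h1 := abs_le.1 (fapInt_approx hP hs)
  have h2 := abs_le.1 (fapInt_approx hP ht)
  have h3 := abs_le.1 (fapInt_approx hP (f := fun x => f x + g x) (s := s + t) (ε := ε / 2) (by
    intro x
    have h1 := abs_le.1 (hs x)
    have h2 := abs_le.1 (ht x)
    simp only [SimpleFunc.coe_add, Pi.add_apply]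
    rw [abs_le]
    constructor <;> linarith))
  rw [simpleInt_add hP] at h3
  rw [abs_le]
  constructor <;> linarith

lemma fapInt_mono {P : MSet β → unitInterval} (hP : IsFAP P) {f g : β → ℝ} (hf : BM f) (hg : BM g)
    (h : ∀ x, f x ≤ g x) : fapInt P f ≤ fapInt P g := by
  refine le_of_forall_pos_le_add fun ε hε => ?_
  obtain ⟨s, hs⟩ := hf.exists_approx (ε := ε / 4) (by linarith)
  obtain ⟨t, ht⟩ := hg.exists_approx (ε := ε / 4) (by linarith)
  have h1 := abs_le.1 (fapInt_approx hP hs)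
  have h2 := abs_le.1 (fapInt_approx hP ht)
  have h3 : simpleInt P s ≤ simpleInt P t + ε / 2 := simpleInt_le_add hP fun x => by
    have h1 := abs_le.1 (hs x)
    have h2 := abs_le.1 (ht x)
    have := h x
    linarith
  linarith

lemma fapInt_nonneg {P : MSet β → unitInterval} (hP : IsFAP P) {f : β → ℝ} (hf : BM f)
    (h : ∀ x, 0 ≤ f x) : 0 ≤ fapInt P f := by
  have h0 : BM (fun _ : β => (0 : ℝ)) := ⟨measurable_const, 0, by simp⟩
  have h1 := fapInt_add hP h0 h0
  have h2 := fapInt_mono hP h0 hf h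
  simp only [add_zero] at h1
  linarith

lemma fapInt_cont {f : β → ℝ} (hf : BM f) :
    ContinuousOn (fun P : MSet β → unitInterval => fapInt P f) {P | IsFAP P} := by
  refine continuousOn_of_uniform_approx_of_continuousOn fun u hu => ?_
  obtain ⟨ε, hε, hu⟩ := Metric.mem_uniformity_dist.1 hu
  obtain ⟨s, hs⟩ := hf.exists_approx (ε := ε / 2) (by linarith)
  refine ⟨fun P => simpleInt P s, ?_, fun P hP => hu ?_⟩
  · unfold simpleInt
    fun_prop
  · have := fapInt_approx hP hs
    rw [Real.dist_eq]
    linarith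

/-- truncation -/
def trunc (c : β → ℝ≥0∞) (k : ℕ) : β → ℝ := fun x => (c x ⊓ (k : ℝ≥0∞)).toReal

lemma inf_ne_top' (a : ℝ≥0∞) (k : ℕ) : a ⊓ (k : ℝ≥0∞) ≠ ⊤ :=
  (inf_le_right.trans_lt (ENNReal.natCast_lt_top k)).ne

lemma trunc_BM {c : β → ℝ≥0∞} (hc : Measurable c) (k : ℕ) : BM (trunc c k) := by
  refine ⟨(hc.inf measurable_const).ennreal_toReal, k, fun x => ?_⟩
  rw [trunc, abs_of_nonneg ENNReal.toReal_nonneg]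
  simpa using ENNReal.toReal_mono (ENNReal.natCast_ne_top k) (inf_le_right (a := c x))

lemma fapIntTop_eq_s6 (P : MSet β → unitInterval) (c : β → ℝ≥0∞) :
    fapIntTop P c = ⨆ k : ℕ, ENNReal.ofReal (fapInt P (trunc c k)) := rfl

lemma trunc_mono_fap {P : MSet β → unitInterval} (hP : IsFAP P) {c : β → ℝ≥0∞}
    (hc : Measurable c) : Monotone fun k : ℕ => ENNReal.ofReal (fapInt P (trunc c k)) := by
  intro k l hkl
  refine ENNReal.ofReal_le_ofReal (fapInt_mono hP (trunc_BM hc k) (trunc_BM hc l) fun x => ?_)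
  refine ENNReal.toReal_mono (inf_ne_top' _ _) (inf_le_inf_left _ ?_)
  exact_mod_cast hkl

lemma fapIntTop_add {P : MSet β → unitInterval} (hP : IsFAP P) {c d : β → ℝ≥0∞}
    (hc : Measurable c) (hd : Measurable d) :
    fapIntTop P (fun x => c x + d x) = fapIntTop P c + fapIntTop P d := by
  have hcd : Measurable (fun x => c x + d x) := hc.add hd
  have nn : ∀ (c : β → ℝ≥0∞), Measurable c → ∀ k, 0 ≤ fapInt P (trunc c k) := fun c hc k =>
    fapInt_nonneg hP (trunc_BM hc k) fun x => ENNReal.toReal_nonneg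
  simp only [fapIntTop_eq_s6]
  rw [ENNReal.iSup_add_iSup_of_monotone (trunc_mono_fap hP hc) (trunc_mono_fap hP hd)]
  apply le_antisymm
  · refine iSup_mono fun k => ?_
    rw [← ENNReal.ofReal_add (nn c hc k) (nn d hd k), ← fapInt_add hP (trunc_BM hc k) (trunc_BM hd k)]
    refine ENNReal.ofReal_le_ofReal (fapInt_mono hP (trunc_BM hcd k)
      ((trunc_BM hc k).add (trunc_BM hd k)) fun x => ?_)
    simp only [trunc]
    rw [← ENNReal.toReal_add (inf_ne_top' _ _) (inf_ne_top' _ _)]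
    refine ENNReal.toReal_mono (ENNReal.add_ne_top.2 ⟨inf_ne_top' _ _, inf_ne_top' _ _⟩) ?_
    rcases le_total (c x) k with h1 | h1
    · rcases le_total (d x) k with h2 | h2
      · rw [inf_eq_left.2 h1, inf_eq_left.2 h2]; exact inf_le_left
      · rw [inf_eq_right.2 h2]; exact inf_le_right.trans le_add_self
    · rw [inf_eq_right.2 h1]; exact inf_le_right.trans le_self_add
  · refine iSup_le fun k => le_iSup_of_le (k + k) ?_
    rw [← ENNReal.ofReal_add (nn c hc k) (nn d hd k), ← fapInt_add hP (trunc_BM hc k) (trunc_BM hd k)]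
    refine ENNReal.ofReal_le_ofReal (fapInt_mono hP
      ((trunc_BM hc k).add (trunc_BM hd k)) (trunc_BM hcd _) fun x => ?_)
    simp only [trunc]
    rw [← ENNReal.toReal_add (inf_ne_top' _ _) (inf_ne_top' _ _)]
    refine ENNReal.toReal_mono (inf_ne_top' _ _) ?_
    push_cast
    exact le_inf (add_le_add inf_le_left inf_le_left) (add_le_add inf_le_right inf_le_right)

lemma fapIntTop_zero {P : MSet β → unitInterval} (hP : IsFAP P) :
    fapIntTop P (fun _ => 0) = 0 := by
  have h0 : BM (fun _ : β => (0 : ℝ)) := ⟨measurable_const, 0, by simp⟩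
  have h1 := fapInt_add hP h0 h0
  simp only [add_zero] at h1
  have h2 : fapInt P (fun _ => (0 : ℝ)) = 0 := by linarith
  simp [fapIntTop, h2]

lemma fapIntTop_nsmul {P : MSet β → unitInterval} (hP : IsFAP P) {c : β → ℝ≥0∞}
    (hc : Measurable c) (N : ℕ) :
    fapIntTop P (fun x => N * c x) = N * fapIntTop P c := by
  induction N with
  | zero => simpa using fapIntTop_zero hP
  | succ N ih =>
    have h := fapIntTop_add hP (hc.const_mul (N : ℝ≥0∞)) hc
    push_cast
    simp only [add_mul, one_mul]
    rw [h, ih]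

lemma fapIntTop_lsc {c : β → ℝ≥0∞} (hc : Measurable c) :
    LowerSemicontinuousOn (fun P : MSet β → unitInterval => fapIntTop P c) {P | IsFAP P} := by
  simp only [fapIntTop_eq_s6]
  refine lowerSemicontinuousOn_iSup fun k => ContinuousOn.lowerSemicontinuousOn ?_
  exact ENNReal.continuous_ofReal.comp_continuousOn (fapInt_cont (trunc_BM hc k))

lemma cont_of_sum {X : Type*} [TopologicalSpace X] {S : Set X} {H G : X → ℝ≥0∞} {W : ℝ≥0∞}
    (hW : W ≠ ⊤) (hH : LowerSemicontinuousOn H S) (hG : LowerSemicontinuousOn G S)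
    (hs : ∀ x ∈ S, H x + G x = W) : ContinuousOn H S := by
  intro x hx
  refine tendsto_order.2 ⟨fun a ha => hH x hx a ha, fun t ht => ?_⟩
  rcases lt_or_ge W t with h | h
  · filter_upwards [self_mem_nhdsWithin] with y hy
    exact (le_self_add.trans_eq (hs y hy)).trans_lt h
  · have hGt : G x ≠ ⊤ := fun h' => hW (by rw [← hs x hx, h', add_top])
    have h1 : W - t < G x := by
      apply ENNReal.sub_lt_of_lt_add h
      rw [← hs x hx, add_comm]
      exact ENNReal.add_lt_add_left hGt ht
    filter_upwards [self_mem_nhdsWithin, hG x hx _ h1] with y hy h2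
    have hGy : G y ≠ ⊤ := fun h' => hW (by rw [← hs y hy, h', add_top])
    have h3 : W < G y + t := by
      by_contra! h4
      exact absurd (ENNReal.le_sub_of_add_le_right (ne_top_of_le_ne_top hW h) h4) (not_le.2 h2)
    rw [← hs y hy, add_comm] at h3
    exact lt_of_add_lt_add_left h3

lemma couplings_closed {n : ℕ} (μ : Fin n → Measure ℝ) : IsClosed (couplings μ) := by
  have : couplings μ = {P | IsFAP P} ∩ ⋂ (i : Fin n) (B : Set ℝ) (hB : MeasurableSet B),
      {P | (P ⟨(fun ω => ω i) ⁻¹' B, (measurable_pi_apply i) hB⟩ : ℝ) = (μ i B).toReal} := by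
    ext P; simp [couplings]
  rw [this]
  refine IsClosed.inter (IsClosed.inter ?_ ?_) ?_
  · exact isClosed_eq (by fun_prop) continuous_const
  · have : {P : MSet (Fin n → ℝ) → unitInterval | ∀ A B : MSet (Fin n → ℝ), Disjoint A.1 B.1 →
      (P ⟨A.1 ∪ B.1, A.2.union B.2⟩ : ℝ) = (P A : ℝ) + (P B : ℝ)} =
      ⋂ (A : MSet (Fin n → ℝ)) (B : MSet (Fin n → ℝ)) (_ : Disjoint A.1 B.1),
      {P | (P ⟨A.1 ∪ B.1, A.2.union B.2⟩ : ℝ) = (P A : ℝ) + (P B : ℝ)} := by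
      ext P; simp
    change IsClosed {P : MSet (Fin n → ℝ) → unitInterval |
      ∀ A B : MSet (Fin n → ℝ), Disjoint A.1 B.1 →
      (P ⟨A.1 ∪ B.1, A.2.union B.2⟩ : ℝ) = (P A : ℝ) + (P B : ℝ)}
    rw [this]
    exact isClosed_iInter fun A => isClosed_iInter fun B => isClosed_iInter fun _ =>
      isClosed_eq (by fun_prop) (by fun_prop)
  · exact isClosed_iInter fun i => isClosed_iInter fun B => isClosed_iInter fun _ =>
      isClosed_eq (by fun_prop) continuous_const

lemma fapInt_marg {n : ℕ} {μ : Fin n → Measure ℝ} {P Q : MSet (Fin n → ℝ) → unitInterval}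
    (hP : P ∈ couplings μ) (hQ : Q ∈ couplings μ) (i : Fin n) {f : ℝ → ℝ} (hf : BM f) :
    fapInt P (fun ω => f (ω i)) = fapInt Q (fun ω => f (ω i)) := by
  refine eq_of_abs_sub_le_all fun ε hε => ?_
  obtain ⟨s, hs⟩ := hf.exists_approx (ε := ε / 2) (by linarith)
  let t : SimpleFunc (Fin n → ℝ) ℝ := s.comp (fun ω => ω i) (measurable_pi_apply i)
  have ht : ∀ ω, |f (ω i) - t ω| ≤ ε / 2 := fun ω => hs (ω i)
  have h1 := abs_le.1 (fapInt_approx hP.1 ht)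
  have h2 := abs_le.1 (fapInt_approx hQ.1 ht)
  have h3 : simpleInt P t = simpleInt Q t := by
    refine Finset.sum_congr rfl fun y _ => ?_
    have e1 := hP.2 i _ (s.measurableSet_fiber y)
    have e2 := hQ.2 i _ (s.measurableSet_fiber y)
    exact congrArg (y * ·) (e1.trans e2.symm)
  rw [abs_le]
  constructor <;> linarith

lemma fapIntTop_marg {n : ℕ} {μ : Fin n → Measure ℝ} {P Q : MSet (Fin n → ℝ) → unitInterval}
    (hP : P ∈ couplings μ) (hQ : Q ∈ couplings μ) (i : Fin n) {f : ℝ → ℝ≥0∞} (hf : Measurable f) :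
    fapIntTop P (fun ω => f (ω i)) = fapIntTop Q (fun ω => f (ω i)) := by
  refine iSup_congr fun k => ?_
  exact congrArg _ (fapInt_marg hP hQ i (trunc_BM hf k))

lemma top_cont {n : ℕ} {μ : Fin n → Measure ℝ} {P₀ : MSet (Fin n → ℝ) → unitInterval}
    (hP₀ : P₀ ∈ couplings μ) (hfin : ∀ i : Fin n, fapIntTop P₀ (fun ω => ENNReal.ofReal |ω i|) < ⊤)
    (i j : Fin n) (N : ℕ) {h : (Fin n → ℝ) → ℝ≥0∞} (hm : Measurable h)
    (hb : ∀ ω, h ω ≤ N * (ENNReal.ofReal |ω i| + ENNReal.ofReal |ω j|)) :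
    ContinuousOn (fun P : MSet (Fin n → ℝ) → unitInterval => (fapIntTop P h).toReal)
      (couplings μ) := by
  have ma : Measurable (fun x : ℝ => ENNReal.ofReal |x|) := by fun_prop
  have mi : ∀ i : Fin n, Measurable (fun ω : Fin n → ℝ => ENNReal.ofReal |ω i|) :=
    fun i => ma.comp (measurable_pi_apply i)
  set w : (Fin n → ℝ) → ℝ≥0∞ := fun ω => N * (ENNReal.ofReal |ω i| + ENNReal.ofReal |ω j|) with hw
  have mij : Measurable (fun ω : Fin n → ℝ => ENNReal.ofReal |ω i| + ENNReal.ofReal |ω j|) :=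
    (mi i).add (mi j)
  have mw : Measurable w := ((mi i).add (mi j)).const_mul _
  have ms : Measurable (fun ω => w ω - h ω) := mw.sub hm
  have eW : ∀ P ∈ couplings μ, fapIntTop P w = N * (fapIntTop P₀ (fun ω => ENNReal.ofReal |ω i|) +
      fapIntTop P₀ (fun ω => ENNReal.ofReal |ω j|)) := by
    intro P hP
    rw [hw, fapIntTop_nsmul hP.1 mij, fapIntTop_add hP.1 (mi i) (mi j),
      fapIntTop_marg hP hP₀ i ma, fapIntTop_marg hP hP₀ j ma]
  have hW : N * (fapIntTop P₀ (fun ω => ENNReal.ofReal |ω i|) +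
      fapIntTop P₀ (fun ω => ENNReal.ofReal |ω j|)) ≠ ⊤ :=
    ENNReal.mul_ne_top (ENNReal.natCast_ne_top N)
      (ENNReal.add_ne_top.2 ⟨(hfin i).ne, (hfin j).ne⟩)
  have hsub : couplings μ ⊆ {P | IsFAP P} := fun P hP => hP.1
  have hsum : ∀ P ∈ couplings μ, fapIntTop P h + fapIntTop P (fun ω => w ω - h ω) =
      N * (fapIntTop P₀ (fun ω => ENNReal.ofReal |ω i|) +
      fapIntTop P₀ (fun ω => ENNReal.ofReal |ω j|)) := by
    intro P hP
    rw [← eW P hP, ← fapIntTop_add hP.1 hm ms]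
    congr 1
    funext ω
    exact add_tsub_cancel_of_le (hb ω)
  have hc := cont_of_sum hW ((fapIntTop_lsc hm).mono hsub) ((fapIntTop_lsc ms).mono hsub)
    hsum
  refine ENNReal.continuousOn_toReal.comp hc fun P hP => ?_
  exact ne_top_of_le_ne_top hW (le_self_add.trans_eq (hsum P hP))

lemma R_cont {n : ℕ} {μ : Fin n → Measure ℝ} {P₀ : MSet (Fin n → ℝ) → unitInterval}
    (hP₀ : P₀ ∈ couplings μ) (hfin : ∀ i : Fin n, fapIntTop P₀ (fun ω => ENNReal.ofReal |ω i|) < ⊤)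
    (i j : Fin n) (N : ℕ) {f : (Fin n → ℝ) → ℝ} (hm : Measurable f)
    (hb : ∀ ω, |f ω| ≤ N * (|ω i| + |ω j|)) :
    ContinuousOn (fun P : MSet (Fin n → ℝ) → unitInterval => fapIntR P f) (couplings μ) := by
  have key : ∀ ω y, y ≤ |f ω| →
      ENNReal.ofReal y ≤ N * (ENNReal.ofReal |ω i| + ENNReal.ofReal |ω j|) := by
    intro ω y hy
    rw [← ENNReal.ofReal_add (abs_nonneg _) (abs_nonneg _), ← ENNReal.ofReal_natCast,
      ← ENNReal.ofReal_mul (Nat.cast_nonneg N)]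
    exact ENNReal.ofReal_le_ofReal (hy.trans (hb ω))
  exact (top_cont hP₀ hfin i j N hm.ennreal_ofReal fun ω => key ω _ (le_abs_self _)).sub
    (top_cont hP₀ hfin i j N hm.neg.ennreal_ofReal fun ω => key ω _ (neg_le_abs _))

lemma K2_closed {n : ℕ} (hn : 0 < n) (μ : Fin n → Measure ℝ)
    (hne : ({P ∈ couplings μ | IsMartFAP hn P}).Nonempty) :
    IsClosed {P ∈ couplings μ | IsMartFAP hn P} := by
  obtain ⟨P₀, hP₀, hfin, -, -⟩ := hne
  have hcl := couplings_closed μ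
  have ma : Measurable (fun x : ℝ => ENNReal.ofReal |x|) := by fun_prop
  have e : {P ∈ couplings μ | IsMartFAP hn P} =
      (couplings μ ∩ (fun P => fapIntR P (fun ω => ω ⟨0, hn⟩)) ⁻¹' {0}) ∩
      ⋂ (i : Fin n) (j : Fin n) (_ : (j : ℕ) = (i : ℕ) + 1) (g : (Fin n → ℝ) → ℝ)
        (_ : Measurable g) (_ : ∃ C, ∀ x, |g x| ≤ C)
        (_ : ∀ x y : Fin n → ℝ, (∀ k : Fin n, k ≤ i → x k = y k) → g x = g y),
        (couplings μ ∩ (fun P => fapIntR P (fun ω => (ω j - ω i) * g ω)) ⁻¹' {0}) := by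
    ext P
    simp only [Set.mem_inter_iff, Set.mem_iInter, Set.mem_preimage, Set.mem_singleton_iff,
      Set.mem_ofPred_eq, IsMartFAP]
    constructor
    · rintro ⟨h1, h2, h3, h4⟩
      exact ⟨⟨h1, h3⟩, fun i j hij g a b c => ⟨h1, h4 i j hij g a b c⟩⟩
    · rintro ⟨⟨h1, h3⟩, h4⟩
      refine ⟨h1, fun i => ?_, h3, fun i j hij g a b c => (h4 i j hij g a b c).2⟩
      rw [fapIntTop_marg h1 hP₀ i ma]
      exact hfin i
  rw [e]
  refine IsClosed.inter ?_ ?_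
  · refine (R_cont hP₀ hfin ⟨0, hn⟩ ⟨0, hn⟩ 1 (measurable_pi_apply _) fun ω => ?_
      ).preimage_isClosed_of_isClosed hcl isClosed_singleton
    have := abs_nonneg (ω ⟨0, hn⟩)
    push_cast
    linarith
  · refine isClosed_iInter fun i => isClosed_iInter fun j => isClosed_iInter fun _ =>
      isClosed_iInter fun g => isClosed_iInter fun hg => isClosed_iInter fun hC =>
      isClosed_iInter fun _ => ?_
    obtain ⟨C, hC⟩ := hC
    obtain ⟨N, hN⟩ := exists_nat_ge C
    refine (R_cont hP₀ hfin i j N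
      (((measurable_pi_apply j).sub (measurable_pi_apply i)).mul hg) fun ω => ?_
      ).preimage_isClosed_of_isClosed hcl isClosed_singleton
    change |(ω j - ω i) * g ω| ≤ _
    rw [abs_mul, mul_comm]
    have h1 : |ω j - ω i| ≤ |ω i| + |ω j| := by
      rw [add_comm]; exact abs_sub _ _
    exact mul_le_mul ((hC ω).trans hN) h1 (abs_nonneg _) (Nat.cast_nonneg N)

end aux

/-- on `Ω = ℝⁿ`, if `K₂ = {P ∈ M : (π_1,…,π_n) is a P-martingale}` is
nonempty, then `K₂` is compact and there is `P ∈ K₂` with `P(c) = inf_{Q ∈ K₂} Q(c)`. -/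
theorem K2_compact_and_min
    {n : ℕ} (hn : 0 < n) (μ : Fin n → Measure ℝ) [∀ i, IsProbabilityMeasure (μ i)]
    (c : (Fin n → ℝ) → ℝ≥0∞) (hc : Measurable c)
    (hne : ({P ∈ couplings μ | IsMartFAP hn P}).Nonempty) :
    IsCompact {P ∈ couplings μ | IsMartFAP hn P} ∧
      ∃ P ∈ {P ∈ couplings μ | IsMartFAP hn P},
        fapIntTop P c = ⨅ Q ∈ {P ∈ couplings μ | IsMartFAP hn P}, fapIntTop Q c := by
  have hcl := K2_closed hn μ hne
  have hcpt := hcl.isCompact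
  refine ⟨hcpt, ?_⟩
  obtain ⟨P, hP, hmin⟩ := ((fapIntTop_lsc hc).mono
    (fun Q hQ => hQ.1.1)).exists_isMinOn hne hcpt
  exact ⟨P, hP, le_antisymm (le_iInf₂ fun Q hQ => hmin hQ) (iInf₂_le P hP)⟩

end FATransport
end
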